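/- Let 0<q<1 and σ>0, and take γ=0 (so condition (R) holds). Then the radii of starlikeness of g_{0,σ}(·;q) and h_{0,σ}(·;q) satisfy (1+q)/(3σ²) < (r*(g_{0,σ}(·;q)))² < 3(1+q)(1+q²)(1+q+q²) / ( σ²(9q⁴+9q³+8q²+9q+9) ) and (1+q)/(2σ²) < r*(h_{0,σ}(·;q)) < (1+q)(1+q²)(1+q+q²) / ( σ²(2q⁴+2q³+q²+2q+2) ). -/

import Mathlib

noncomputable def qPochInf (a q : ℝ) : ℝ := ∏' k : ℕ, (1 - a * q ^ k)

noncomputable def qGamma (q x : ℝ) : ℝ :=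
  qPochInf q q * (1 - q) ^ (1 - x) / qPochInf (q ^ x) q

noncomputable def qML (γ σ q : ℝ) (z : ℂ) : ℂ :=
  ∑' n : ℕ,
    (((-1) ^ n * σ ^ (2 * n) * q ^ (n * (n - 1)) / qGamma q (2 * n + γ + 1) : ℝ) : ℂ) * z ^ (2 * n)

noncomputable def qMLR (γ σ q : ℝ) (x : ℝ) : ℝ :=
  ∑' n : ℕ,
    ((-1) ^ n * σ ^ (2 * n) * q ^ (n * (n - 1)) / qGamma q (2 * n + γ + 1)) * x ^ (2 * n)

def condR (q γ : ℝ) : Prop :=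
  (γ = 0 ∨ γ = 1) ∨
    (γ ∈ Set.Ioo (0 : ℝ) 2 ∧ γ ≠ 1 ∧
      1 < q⁻¹ * (1 - q) * (1 - q ^ (γ + 1)) * (1 - q ^ (γ + 2)))

noncomputable def radiusStarlike (α : ℝ) (f : ℂ → ℂ) : ℝ :=
  sSup {r : ℝ | 0 < r ∧ ∀ z : ℂ, 0 < ‖z‖ → ‖z‖ < r →
    α < (z * deriv f z / f z).re}

noncomputable def radiusConvex (α : ℝ) (f : ℂ → ℂ) : ℝ :=
  sSup {r : ℝ | 0 < r ∧ ∀ z : ℂ, ‖z‖ < r →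
    α < (1 + z * deriv (deriv f) z / deriv f z).re}

noncomputable def fML (γ σ q : ℝ) (z : ℂ) : ℂ :=
  Complex.exp ((1 / ((γ : ℂ) + 1)) *
    Complex.log (z ^ ((γ : ℂ) + 1) * (qGamma q (γ + 1) : ℂ) * qML γ σ q z))

noncomputable def gML (γ σ q : ℝ) (z : ℂ) : ℂ :=
  z * (qGamma q (γ + 1) : ℂ) * qML γ σ q z

noncomputable def hML (γ σ q : ℝ) (z : ℂ) : ℂ :=
  z * (qGamma q (γ + 1) : ℂ) *
    ∑' n : ℕ,
      (((-1) ^ n * σ ^ (2 * n) * q ^ (n * (n - 1)) / qGamma q (2 * n + γ + 1) : ℝ) : ℂ) * z ^ n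

noncomputable def hMLR (γ σ q : ℝ) (x : ℝ) : ℝ :=
  x * qGamma q (γ + 1) *
    ∑' n : ℕ,
      ((-1) ^ n * σ ^ (2 * n) * q ^ (n * (n - 1)) / qGamma q (2 * n + γ + 1)) * x ^ n

/-- Normalized function $g_{0,σ}(z;q) = z·λ_{0,σ}(z;q)$ (using $Γ_q(1)=1$). -/
noncomputable def gML0 (σ q : ℝ) (z : ℂ) : ℂ := z * qML 0 σ q z

/-- Normalized function $h_{0,σ}(z;q)$ (using $Γ_q(1)=1$). -/
noncomputable def hML0 (σ q : ℝ) (z : ℂ) : ℂ :=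
  z * ∑' n : ℕ,
    (((-1) ^ n * σ ^ (2 * n) * q ^ (n * (n - 1)) / qGamma q (2 * n + 1) : ℝ) : ℂ) * z ^ n


lemma qPoch_mult {q : ℝ} (hq0 : 0 < q) (hq1 : q < 1) (a : ℝ) :
    Multipliable (fun k : ℕ => 1 - a * q ^ k) := by
  have h : Summable (fun k : ℕ => -(a * q ^ k)) :=
    ((summable_geometric_of_lt_one hq0.le hq1).mul_left a).neg
  simpa [sub_eq_add_neg] using multipliable_one_add_of_summable h.norm

lemma qPoch_ne {q : ℝ} (hq0 : 0 < q) (hq1 : q < 1) {a : ℝ} (ha : a < 1) :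
    qPochInf a q ≠ 0 := by
  have h : Summable (fun k : ℕ => -(a * q ^ k)) :=
    ((summable_geometric_of_lt_one hq0.le hq1).mul_left a).neg
  have := tprod_one_add_ne_zero_of_summable (f := fun k : ℕ => -(a * q ^ k)) (fun k => by
    have h1 : q ^ k ≤ 1 := pow_le_one₀ hq0.le hq1.le
    have h2 : 0 < q ^ k := by positivity
    have : a * q ^ k < 1 := by
      rcases le_or_gt a 0 with h | h <;> nlinarith
    intro h; linarith) h.norm
  simpa [sub_eq_add_neg, qPochInf] using this

lemma qPoch_rec {q : ℝ} (hq0 : 0 < q) (hq1 : q < 1) (a : ℝ) :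
    qPochInf a q = (1 - a) * qPochInf (a * q) q := by
  have h : Multipliable (fun k : ℕ => 1 - a * q ^ (k + 1)) := by
    refine (qPoch_mult hq0 hq1 (a * q)).congr fun k => ?_
    rw [pow_succ]; ring
  have h2 := tprod_eq_zero_mul' (f := fun k : ℕ => 1 - a * q ^ k) h
  have e : qPochInf (a * q) q = ∏' k : ℕ, (1 - a * q ^ (k + 1)) := by
    refine tprod_congr fun k => ?_
    rw [pow_succ]; ring
  have e0 : (1 - a * q ^ 0) = 1 - a := by rw [pow_zero, mul_one]
  rw [e, ← e0]
  exact h2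

lemma qGamma_one {q : ℝ} (hq0 : 0 < q) (hq1 : q < 1) : qGamma q 1 = 1 := by
  unfold qGamma
  have := qPoch_ne hq0 hq1 hq1
  simp [div_self this]

lemma qGamma_succ {q : ℝ} (hq0 : 0 < q) (hq1 : q < 1) {x : ℝ} (hx : 0 < x) :
    qGamma q (x + 1) = (1 - q ^ x) / (1 - q) * qGamma q x := by
  unfold qGamma
  have h1 : q ^ x < 1 := Real.rpow_lt_one hq0.le hq1 hx
  have h2 : q ^ (x + 1) = q ^ x * q := by rw [Real.rpow_add hq0, Real.rpow_one]
  have h4 : q ^ x * q < 1 := by have : 0 < q ^ x := by positivity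
                                nlinarith
  have h3 := qPoch_ne hq0 hq1 h4
  have h6 : (1 - q) ^ (1 - x) = (1 - q) ^ (1 - (x + 1)) * (1 - q) := by
    rw [← Real.rpow_add_one (by linarith)]; congr 1; ring
  rw [qPoch_rec hq0 hq1 (q ^ x), h2, h6]
  have h5 : 1 - q ^ x ≠ 0 := by linarith
  have h7 : 1 - q ≠ 0 := by linarith
  field_simp

/-- normalized coefficients -/
noncomputable def bC (q : ℝ) (n : ℕ) : ℝ :=
  q ^ (n * (n - 1)) / qGamma q (2 * n + 1) * (1 + q) ^ n

lemma bC_zero {q : ℝ} (hq0 : 0 < q) (hq1 : q < 1) : bC q 0 = 1 := by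
  simp [bC, qGamma_one hq0 hq1]

lemma bC_succ {q : ℝ} (hq0 : 0 < q) (hq1 : q < 1) (n : ℕ) :
    bC q (n + 1) = q ^ (2 * n) * (1 - q) ^ 2 * (1 + q) /
      ((1 - q ^ (2 * n + 1)) * (1 - q ^ (2 * n + 2))) * bC q n := by
  unfold bC
  have e1 : (2 * ((n + 1 : ℕ) : ℝ) + 1) = ((2 * n + 1 : ℝ) + 1) + 1 := by push_cast; ring
  have e2 : (n + 1) * (n + 1 - 1) = 2 * n + n * (n - 1) := by
    rcases n with _ | n
    · simp
    · simp; ring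
  have p1 : q ^ (2 * n + 1 : ℝ) = q ^ (2 * n + 1) := by
    rw [← Real.rpow_natCast]; push_cast; rfl
  have p2 : q ^ ((2 * n + 1 : ℝ) + 1) = q ^ (2 * n + 2) := by
    rw [← Real.rpow_natCast]; push_cast; congr 1; ring
  rw [e1, qGamma_succ hq0 hq1 (by positivity), qGamma_succ hq0 hq1 (by positivity), e2, pow_add,
    p1, p2]
  have h7 : 1 - q ≠ 0 := by linarith
  rw [pow_succ (1 + q)]
  simp only [div_eq_mul_inv, mul_inv, inv_inv]
  ring

lemma bC_pos {q : ℝ} (hq0 : 0 < q) (hq1 : q < 1) (n : ℕ) : 0 < bC q n := by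
  induction n with
  | zero => simp [bC_zero hq0 hq1]
  | succ n ih =>
    rw [bC_succ hq0 hq1]
    have h1 : q ^ (2 * n + 1) < 1 := pow_lt_one₀ hq0.le hq1 (by simp)
    have h2 : q ^ (2 * n + 2) < 1 := pow_lt_one₀ hq0.le hq1 (by simp)
    have h3 := sub_pos.2 h1
    have h4 := sub_pos.2 h2
    have h5 := sub_pos.2 hq1
    positivity

lemma bC_one {q : ℝ} (hq0 : 0 < q) (hq1 : q < 1) : bC q 1 = 1 := by
  rw [bC_succ hq0 hq1 0, bC_zero hq0 hq1]
  have h7 : 1 - q ≠ 0 := by linarith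
  have h8 : 1 - q ^ 2 ≠ 0 := by nlinarith
  simp
  field_simp
  ring

lemma bC_two {q : ℝ} (hq0 : 0 < q) (hq1 : q < 1) :
    bC q 2 = q ^ 2 / ((1 + q + q ^ 2) * (1 + q ^ 2)) := by
  rw [bC_succ hq0 hq1 1, bC_one hq0 hq1]
  have h7 : 1 - q ≠ 0 := by linarith
  have e1 : 1 - q ^ (2 * 1 + 1) = (1 - q) * (1 + q + q ^ 2) := by ring
  have e2 : 1 - q ^ (2 * 1 + 2) = (1 - q) * (1 + q) * (1 + q ^ 2) := by ring
  rw [e1, e2]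
  field_simp

lemma bC_ratio {q : ℝ} (hq0 : 0 < q) (hq1 : q < 1) (n : ℕ) (hn : 1 ≤ n) :
    bC q (n + 1) ≤ bC q n / 6 := by
  rw [bC_succ hq0 hq1]
  have h1 : q ^ (2 * n + 1) < 1 := pow_lt_one₀ hq0.le hq1 (by simp)
  have h2 : q ^ (2 * n + 2) < 1 := pow_lt_one₀ hq0.le hq1 (by simp)
  have hb := bC_pos hq0 hq1 n
  have h3 := sub_pos.2 h1
  have h4 := sub_pos.2 h2
  have h5 := sub_pos.2 hq1
  have ht : q ^ n ≤ q := by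
    calc q ^ n ≤ q ^ 1 := pow_le_pow_of_le_one hq0.le hq1.le hn
      _ = q := pow_one q
  have ht0 : 0 < q ^ n := by positivity
  suffices h : q ^ (2 * n) * (1 - q) ^ 2 * (1 + q) /
      ((1 - q ^ (2 * n + 1)) * (1 - q ^ (2 * n + 2))) ≤ 1 / 6 by
    nlinarith
  rw [div_le_div_iff₀ (by positivity) (by norm_num)]
  have e0 : q ^ (2 * n) = (q ^ n) ^ 2 := by rw [mul_comm, pow_mul]
  have e1 : q ^ (2 * n + 1) = q * (q ^ n) ^ 2 := by rw [pow_succ, e0]; ring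
  have e2 : q ^ (2 * n + 2) = q ^ 2 * (q ^ n) ^ 2 := by rw [pow_add, e0]; ring
  rw [e1] at h3 h1 ⊢
  rw [e2] at h4 h2 ⊢
  rw [e0]
  generalize q ^ n = t at *
  have k1 : 3 * t * (1 - q) ≤ 1 - q * t ^ 2 := by
    have : 0 ≤ (1 - q) ^ 3 := by positivity
    nlinarith [mul_nonneg (sub_nonneg.2 ht) hq0.le, mul_nonneg (sub_nonneg.2 ht) h5.le,
      mul_nonneg (mul_nonneg (sub_nonneg.2 ht) hq0.le) ht0.le,
      mul_nonneg (mul_nonneg (sub_nonneg.2 ht) hq0.le) hq0.le]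
  have k2 : 2 * t * (1 - q ^ 2) ≤ 1 - q ^ 2 * t ^ 2 := by
    have : 0 ≤ (1 - q) ^ 3 * (1 + q) := by positivity
    have h6 : 0 ≤ 1 - q ^ 2 := by nlinarith
    nlinarith [mul_nonneg (sub_nonneg.2 ht) h6,
      mul_nonneg (mul_nonneg (sub_nonneg.2 ht) (sq_nonneg q)) ht0.le,
      mul_nonneg (mul_nonneg (sub_nonneg.2 ht) (sq_nonneg q)) hq0.le]
  have h6 : 0 ≤ 1 - q ^ 2 := by nlinarith
  have := mul_le_mul k1 k2 (by positivity) h3.le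
  nlinarith

structure GoodB (b : ℕ → ℝ) : Prop where
  zero : b 0 = 1
  one : b 1 = 1
  pos : ∀ n, 0 < b n
  ratio : ∀ n, 1 ≤ n → b (n + 1) ≤ b n / 6

noncomputable def PsiT (b : ℕ → ℝ) (m n : ℕ) : ℝ := (-1) ^ n * ((1 + m * n) * b n)

noncomputable def Psi (b : ℕ → ℝ) (m : ℕ) (u : ℂ) : ℂ :=
  ∑' n : ℕ, ((PsiT b m n : ℝ) : ℂ) * u ^ n

lemma GoodB.le {b : ℕ → ℝ} (h : GoodB b) (n : ℕ) : b n ≤ 6 * (1 / 6) ^ n := by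
  rcases n with _ | n
  · simp [h.zero]
  induction n with
  | zero => simp [h.one]
  | succ n ih =>
    have := h.ratio (n + 1) (by omega)
    rw [pow_succ]
    linarith

lemma GoodB.tail {b : ℕ → ℝ} (h : GoodB b) (k : ℕ) : b (k + 3) ≤ b 2 / 6 * (1 / 6) ^ k := by
  induction k with
  | zero => simpa using h.ratio 2 (by omega)
  | succ n ih =>
    have := h.ratio (n + 3) (by omega)
    rw [pow_succ]
    rw [show n + 1 + 3 = n + 3 + 1 by ring]
    linarith

lemma nat_le_two_pow_real (n : ℕ) : (n : ℝ) + 1 ≤ 2 ^ n := by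
  have := @Nat.lt_two_pow_self n
  exact_mod_cast this

lemma abs_PsiT {b : ℕ → ℝ} (h : GoodB b) (m n : ℕ) : |PsiT b m n| = (1 + m * n) * b n := by
  have := h.pos n
  rw [PsiT, abs_mul, abs_pow, abs_neg, abs_one, one_pow, one_mul, abs_of_nonneg (by positivity)]

lemma abs_PsiT_le {b : ℕ → ℝ} (h : GoodB b) (m n : ℕ) :
    |PsiT b m n| ≤ 6 * (1 + m) * (1 / 3) ^ n := by
  rw [abs_PsiT h]
  have h1 := h.le n
  have h2 := nat_le_two_pow_real n
  have h3 : ((1:ℝ) / 3) ^ n = (1 / 6) ^ n * 2 ^ n := by rw [← mul_pow]; norm_num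
  have h4 : (1 + m * n : ℝ) ≤ (1 + m) * 2 ^ n := by
    have : (0:ℝ) ≤ m := by positivity
    have : (0:ℝ) ≤ n := by positivity
    nlinarith
  rw [h3]
  calc (1 + m * n : ℝ) * b n ≤ ((1 + m) * 2 ^ n) * (6 * (1 / 6) ^ n) := by
        have := h.pos n
        gcongr
    _ = _ := by ring

lemma abs_PsiT_tail {b : ℕ → ℝ} (h : GoodB b) (m k : ℕ) :
    |PsiT b m (k + 3)| ≤ (1 + 3 * m) * b 2 / 6 * (1 / 3) ^ k := by
  rw [abs_PsiT h]
  have h1 := h.tail k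
  have h2 := nat_le_two_pow_real k
  have h3 : ((1:ℝ) / 3) ^ k = (1 / 6) ^ k * 2 ^ k := by rw [← mul_pow]; norm_num
  have h4 : (1 + m * ((k + 3 : ℕ) : ℝ)) ≤ (1 + 3 * m) * 2 ^ k := by
    have : (0:ℝ) ≤ m := by positivity
    have : (0:ℝ) ≤ k := by positivity
    push_cast
    nlinarith [mul_nonneg (show (0:ℝ) ≤ m by positivity) this]
  rw [h3]
  calc (1 + m * ((k + 3 : ℕ) : ℝ)) * b (k + 3) ≤ ((1 + 3 * m) * 2 ^ k) * (b 2 / 6 * (1 / 6) ^ k) := by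
        have := h.pos (k + 3)
        gcongr
    _ = _ := by ring

lemma summable_maj (m : ℕ) : Summable (fun n : ℕ => 6 * (1 + m : ℝ) * (2 / 3) ^ n) :=
  (summable_geometric_of_lt_one (by norm_num) (by norm_num)).mul_left _

lemma term_bound {b : ℕ → ℝ} (h : GoodB b) (m n : ℕ) {u : ℂ} (hu : ‖u‖ ≤ 2) :
    ‖((PsiT b m n : ℝ) : ℂ) * u ^ n‖ ≤ 6 * (1 + m : ℝ) * (2 / 3) ^ n := by
  rw [norm_mul, norm_pow, Complex.norm_real, Real.norm_eq_abs]
  calc |PsiT b m n| * ‖u‖ ^ n ≤ (6 * (1 + m) * (1 / 3) ^ n) * 2 ^ n := by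
        have := abs_PsiT_le h m n
        gcongr
    _ = 6 * (1 + m : ℝ) * ((1 / 3) * 2) ^ n := by rw [mul_pow]; ring
    _ = _ := by norm_num

lemma Psi_summable {b : ℕ → ℝ} (h : GoodB b) (m : ℕ) {u : ℂ} (hu : ‖u‖ ≤ 2) :
    Summable (fun n : ℕ => ((PsiT b m n : ℝ) : ℂ) * u ^ n) :=
  Summable.of_norm_bounded (summable_maj m) fun n => term_bound h m n hu

lemma Psi_cont {b : ℕ → ℝ} (h : GoodB b) (m : ℕ) :
    ContinuousOn (Psi b m) (Metric.ball 0 2) := by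
  refine continuousOn_tsum (fun n => by fun_prop) (summable_maj m) fun n u hu => ?_
  exact term_bound h m n (by simpa using (mem_ball_zero_iff.1 hu).le)

lemma Psi_deriv {b : ℕ → ℝ} (h : GoodB b) {u : ℂ} (hu : ‖u‖ < 2) :
    ∃ D : ℂ, HasDerivAt (Psi b 0) D u ∧ ∀ m : ℕ, Psi b m u = Psi b 0 u + m * (u * D) := by
  have hmaj : Summable (fun n : ℕ => 6 * (n : ℝ) * (1 / 3) ^ n) := by
    have := summable_pow_mul_geometric_of_norm_lt_one (R := ℝ) 1 (r := 1 / 3) (by norm_num)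
    refine (this.mul_left 6).congr fun n => by ring
  have hbd : ∀ (n : ℕ) (y : ℂ), y ∈ Metric.ball (0:ℂ) 2 →
      ‖((PsiT b 0 n : ℝ) : ℂ) * (n * y ^ (n - 1))‖ ≤ 6 * (n : ℝ) * (1 / 3) ^ n := by
    intro n y hy
    have hy : ‖y‖ ≤ 2 := (mem_ball_zero_iff.1 hy).le
    rcases n with _ | n
    · simp
    have h1 : |PsiT b 0 (n + 1)| ≤ 6 * (1 / 6) ^ (n + 1) := by
      rw [abs_PsiT h]; simpa using h.le (n + 1)
    rw [norm_mul, norm_mul, norm_pow, Complex.norm_real, Real.norm_eq_abs, Complex.norm_natCast,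
      Nat.add_sub_cancel]
    calc |PsiT b 0 (n + 1)| * (((n + 1 : ℕ) : ℝ) * ‖y‖ ^ n)
        ≤ (6 * (1 / 6) ^ (n + 1)) * (((n + 1 : ℕ) : ℝ) * 2 ^ n) := by gcongr
      _ ≤ (6 * (1 / 6) ^ (n + 1)) * (((n + 1 : ℕ) : ℝ) * 2 ^ (n + 1)) := by
        gcongr <;> norm_num
      _ = 6 * ((n + 1 : ℕ) : ℝ) * ((1 / 6) * 2) ^ (n + 1) := by rw [mul_pow]; ring
      _ = _ := by norm_num
  have hu' : u ∈ Metric.ball (0:ℂ) 2 := mem_ball_zero_iff.2 hu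
  refine ⟨∑' n : ℕ, ((PsiT b 0 n : ℝ) : ℂ) * (n * u ^ (n - 1)), ?_, ?_⟩
  · exact hasDerivAt_tsum_of_isPreconnected (t := Metric.ball (0:ℂ) 2) hmaj Metric.isOpen_ball
      (convex_ball _ _).isPreconnected
      (fun n y _ => (hasDerivAt_pow n y).const_mul _) hbd hu' (Psi_summable h 0 hu.le) hu'
  · intro m
    have hs : Summable (fun n : ℕ => ((PsiT b 0 n : ℝ) : ℂ) * (n * u ^ (n - 1))) :=
      Summable.of_norm_bounded hmaj fun n => hbd n u hu'
    unfold Psi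
    rw [← tsum_mul_left, ← tsum_mul_left, ← (Psi_summable h 0 hu.le).tsum_add
      ((hs.mul_left _).mul_left _)]
    refine tsum_congr fun n => ?_
    rcases n with _ | n
    · simp [PsiT]
    · simp [PsiT]; ring

lemma Psi_split {b : ℕ → ℝ} (h : GoodB b) (m : ℕ) {u : ℂ} (hu : ‖u‖ ≤ 1 / 2) :
    ∃ T : ℂ, Psi b m u = 1 - (1 + m) * u + (1 + 2 * m) * b 2 * u ^ 2 + T ∧
      ‖T‖ ≤ (1 + 3 * m) * b 2 / 5 * ‖u‖ ^ 3 := by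
  refine ⟨∑' k : ℕ, ((PsiT b m (k + 3) : ℝ) : ℂ) * u ^ (k + 3), ?_, ?_⟩
  · unfold Psi
    rw [← (Psi_summable h m (by linarith)).sum_add_tsum_nat_add 3]
    congr 1
    simp [Finset.sum_range_succ, PsiT, h.zero, h.one]
    ring
  · have hg : HasSum (fun k : ℕ => ((1 + 3 * m) * b 2 / 6 * ‖u‖ ^ 3) * (1 / 6 : ℝ) ^ k)
        (((1 + 3 * m) * b 2 / 6 * ‖u‖ ^ 3) * (1 - 1 / 6)⁻¹) :=
      (hasSum_geometric_of_lt_one (by norm_num) (by norm_num)).mul_left _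
    have := tsum_of_norm_bounded hg (f := fun k : ℕ => ((PsiT b m (k + 3) : ℝ) : ℂ) * u ^ (k + 3))
      (fun k => by
        rw [norm_mul, norm_pow, Complex.norm_real, Real.norm_eq_abs]
        have h1 := abs_PsiT_tail h m k
        have hb := h.pos 2
        calc |PsiT b m (k + 3)| * ‖u‖ ^ (k + 3)
            ≤ ((1 + 3 * m) * b 2 / 6 * (1 / 3) ^ k) * ((1 / 2) ^ k * ‖u‖ ^ 3) := by
              rw [pow_add]
              gcongr
          _ = ((1 + 3 * m) * b 2 / 6 * ‖u‖ ^ 3) * ((1 / 3) * (1 / 2)) ^ k := by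
              rw [mul_pow]; ring
          _ = _ := by norm_num)
    refine this.trans (le_of_eq ?_)
    norm_num
    ring

open ComplexConjugate in
lemma re_mul_conj_ge (A B T S : ℂ) :
    (A * conj B).re - ‖A‖ * ‖T‖ - ‖S‖ * ‖B‖ - ‖S‖ * ‖T‖ ≤ ((A + S) * conj (B + T)).re := by
  have key : ∀ X Y : ℂ, -(‖X‖ * ‖Y‖) ≤ (X * conj Y).re := by
    intro X Y
    have := Complex.abs_re_le_norm (X * conj Y)
    rw [norm_mul, Complex.norm_conj] at this
    linarith [neg_abs_le (X * conj Y).re]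
  have e : (A + S) * conj (B + T) = A * conj B + A * conj T + S * conj B + S * conj T := by
    rw [map_add]; ring
  rw [e]
  simp only [Complex.add_re]
  linarith [key A T, key S B, key S T]

open ComplexConjugate in
lemma main_poly (m b : ℝ) (u : ℂ) :
    ((1 - (1 + m) * u + (1 + 2 * m) * b * u ^ 2) * conj (1 - u + b * u ^ 2 : ℂ)).re =
      1 - (2 + m) * u.re + (1 + m) * ‖u‖ ^ 2
      + b * ((2 + 2 * m) * (2 * u.re ^ 2 - ‖u‖ ^ 2) - (2 + 3 * m) * ‖u‖ ^ 2 * u.re)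
      + (1 + 2 * m) * b ^ 2 * ‖u‖ ^ 4 := by
  have e : ‖u‖ ^ 2 = u.re ^ 2 + u.im ^ 2 := by
    rw [Complex.sq_norm, Complex.normSq_apply]; ring
  have e4 : ‖u‖ ^ 4 = (u.re ^ 2 + u.im ^ 2) ^ 2 := by rw [← e]; ring
  rw [e, e4]
  simp [pow_two]
  ring

/-- The real inequality behind the lower bounds. -/
lemma main_ineq {m b x r : ℝ} (hm : m = 1 ∨ m = 2) (hb0 : 0 < b) (hb : b ≤ 1 / 6)
    (hr0 : 0 ≤ r) (hr : r * (1 + m) ≤ 1) (hx : x ≤ r) (hx' : -r ≤ x) :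
    (1 - r) * (1 - (1 + m) * r) + b * r ^ 2 * ((2 + 2 * m) - (2 + 3 * m) * r) ≤
    1 - (2 + m) * x + (1 + m) * r ^ 2
      + b * ((2 + 2 * m) * (2 * x ^ 2 - r ^ 2) - (2 + 3 * m) * r ^ 2 * x)
      + (1 + 2 * m) * b ^ 2 * r ^ 4 := by
  have h4 : 0 ≤ (1 + 2 * m) * b ^ 2 * r ^ 4 := by
    rcases hm with rfl | rfl <;> positivity
  have key : 0 ≤ (r - x) * ((2 + m) - b * (2 * (2 + 2 * m) * (r + x) - (2 + 3 * m) * r ^ 2)) := by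
    apply mul_nonneg (by linarith)
    have hm0 : 0 < m := by rcases hm with rfl | rfl <;> norm_num
    have h1 : 2 * (2 + 2 * m) * (r + x) - (2 + 3 * m) * r ^ 2 ≤ 8 := by
      have : 0 ≤ (2 + 3 * m) * r ^ 2 := by positivity
      nlinarith
    nlinarith
  nlinarith

lemma final_ineq {m β r s t nA nB F : ℝ} (hmr : m = 1 ∨ m = 2) (hb0 : 0 < β) (hb : β ≤ 1 / 6)
    (hr0 : 0 ≤ r) (hu : r * (1 + m) ≤ 1) (hu2 : r ≤ 1 / 2) (hS0 : 0 ≤ s) (hT0 : 0 ≤ t)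
    (hSn : s ≤ (1 + 3 * m) * β / 5 * r ^ 3) (hTn : t ≤ β / 5 * r ^ 3)
    (hA : nA ≤ 1 + (1 + m) * r + (1 + 2 * m) * β * r ^ 2) (hB : nB ≤ 1 + r + β * r ^ 2)
    (h1 : (1 - r) * (1 - (1 + m) * r) + β * r ^ 2 * ((2 + 2 * m) - (2 + 3 * m) * r) ≤ F) :
    0 < F - nA * t - s * nB - s * t := by
  have hr2 : r ^ 2 ≤ 1 / 4 := by nlinarith
  have hr3' : r ^ 3 ≤ 1 / 8 := by
    calc r ^ 3 ≤ (1 / 2) ^ 3 := by gcongr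
      _ = 1 / 8 := by norm_num
  have hbr : β * r ^ 2 ≤ 1 / 6 * (1 / 4) := by gcongr
  have hbr3' : β * r ^ 3 ≤ 1 / 6 * (1 / 8) := by gcongr
  have hB2 : nB ≤ 8 / 5 := by linarith
  have hA2 : nA ≤ 23 / 10 := by
    rcases hmr with h | h <;> rw [h] at hA hu <;> linarith
  have hbr3 : 0 ≤ β * r ^ 3 := by positivity
  have hs2 : s ≤ 7 / 5 * (β * r ^ 3) := by
    rcases hmr with h | h <;> rw [h] at hSn <;> linarith
  have ht2 : t ≤ 1 / 5 * (β * r ^ 3) := by linarith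
  have ht3 : t ≤ 1 / 10 := by linarith
  have L1 : nA * t ≤ 23 / 10 * (1 / 5 * (β * r ^ 3)) := mul_le_mul hA2 ht2 hT0 (by norm_num)
  have L2 : s * (nB + t) ≤ s * (17 / 10) := mul_le_mul_of_nonneg_left (by linarith) hS0
  have L3 : nA * t + s * nB + s * t ≤ 284 / 100 * (β * r ^ 3) := by linarith
  have P : 0 ≤ (1 - r) * (1 - (1 + m) * r) := mul_nonneg (by linarith) (by linarith)
  rcases hr0.eq_or_lt with h0 | h0
  · rw [← h0] at L3 h1
    norm_num at L3 h1
    linarith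
  · have hp : 0 < β * r ^ 2 := by positivity
    have h3 : 284 / 100 * (β * r ^ 3) < β * r ^ 2 * ((2 + 2 * m) - (2 + 3 * m) * r) := by
      have e : 284 / 100 * (β * r ^ 3) = β * r ^ 2 * (284 / 100 * r) := by ring
      rw [e]
      apply mul_lt_mul_of_pos_left _ hp
      rcases hmr with h | h <;> rw [h] at hu ⊢ <;> linarith
    linarith

open ComplexConjugate in
lemma Psi_pos {b : ℕ → ℝ} (h : GoodB b) {m : ℕ} (hm : m = 1 ∨ m = 2) {u : ℂ}
    (hu : ‖u‖ * (1 + m) ≤ 1) : 0 < (Psi b m u * conj (Psi b 0 u)).re := by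
  have hm0 : (1:ℝ) ≤ m := by rcases hm with rfl | rfl <;> norm_num
  have hu2 : ‖u‖ ≤ 1 / 2 := by nlinarith [norm_nonneg u]
  obtain ⟨S, hS, hSn⟩ := Psi_split h m hu2
  obtain ⟨T, hT, hTn⟩ := Psi_split h 0 hu2
  have hb0 := h.pos 2
  have hb : b 2 ≤ 1 / 6 := by have := h.ratio 1 le_rfl; rwa [h.one] at this
  have hmr : (m : ℝ) = 1 ∨ (m : ℝ) = 2 := by rcases hm with rfl | rfl <;> norm_num
  have e1 := main_poly m (b 2) u
  have h1 := main_ineq hmr hb0 hb (norm_nonneg u) hu (Complex.re_le_norm u)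
    (by have := Complex.abs_re_le_norm u; linarith [neg_abs_le u.re])
  have h2 := re_mul_conj_ge (1 - (1 + (m:ℝ)) * u + (1 + 2 * (m:ℝ)) * b 2 * u ^ 2)
    (1 - u + b 2 * u ^ 2) T S
  rw [e1] at h2
  have hT' : Psi b 0 u = 1 - u + b 2 * u ^ 2 + T := by rw [hT]; simp
  rw [hS, hT']
  push_cast at h2 hTn ⊢
  refine lt_of_lt_of_le ?_ h2
  simp only [mul_zero, add_zero, one_mul] at hTn
  have hB : ‖(1 - u + b 2 * u ^ 2 : ℂ)‖ ≤ 1 + ‖u‖ + b 2 * ‖u‖ ^ 2 := by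
    refine (norm_add_le _ _).trans ?_
    have := norm_sub_le 1 u
    rw [norm_mul, norm_pow, Complex.norm_real, Real.norm_eq_abs, abs_of_pos hb0]
    simp at this
    linarith
  have hA : ‖(1 - (1 + (m:ℂ)) * u + (1 + 2 * (m:ℂ)) * b 2 * u ^ 2 : ℂ)‖ ≤
      1 + (1 + m) * ‖u‖ + (1 + 2 * m) * b 2 * ‖u‖ ^ 2 := by
    refine (norm_add_le _ _).trans ?_
    have := norm_sub_le 1 ((1 + (m:ℂ)) * u)
    have e2 : ‖(1 + (m:ℂ))‖ = 1 + m := by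
      rw [show (1 + (m:ℂ)) = ((1 + m : ℕ) : ℂ) by push_cast; rfl, Complex.norm_natCast]
      push_cast; rfl
    have e3 : ‖(1 + 2 * (m:ℂ))‖ = 1 + 2 * m := by
      rw [show (1 + 2 * (m:ℂ)) = ((1 + 2 * m : ℕ) : ℂ) by push_cast; rfl, Complex.norm_natCast]
      push_cast; rfl
    rw [norm_mul, norm_one, e2] at this
    rw [norm_mul, norm_mul, e3, norm_pow, Complex.norm_real, Real.norm_eq_abs, abs_of_pos hb0]
    linarith
  generalize ‖(1 - u + b 2 * u ^ 2 : ℂ)‖ = nB at *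
  generalize ‖(1 - (1 + (m:ℂ)) * u + (1 + 2 * (m:ℂ)) * b 2 * u ^ 2 : ℂ)‖ = nA at *
  have hr0 := norm_nonneg u
  have hS0 := norm_nonneg S
  have hT0 := norm_nonneg T
  generalize ‖u‖ = r at *
  generalize ‖S‖ = s at *
  generalize ‖T‖ = t at *
  generalize b 2 = β at *
  exact final_ineq hmr hb0 hb hr0 hu hu2 hS0 hT0 hSn hTn hA hB h1

open ComplexConjugate in
lemma Psi_pos_nhd {b : ℕ → ℝ} (h : GoodB b) {m : ℕ} (hm : m = 1 ∨ m = 2) :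
    ∃ ρ : ℝ, 1 / (1 + m : ℝ) < ρ ∧ ρ ≤ 2 ∧
      ∀ u : ℂ, ‖u‖ < ρ → 0 < (Psi b m u * conj (Psi b 0 u)).re := by
  have hm0 : (1:ℝ) ≤ m := by rcases hm with rfl | rfl <;> norm_num
  have hc : ContinuousOn (fun u => (Psi b m u * conj (Psi b 0 u)).re) (Metric.ball 0 2) := by
    have h1 := Psi_cont h m
    have h2 := Psi_cont h 0
    exact Complex.continuous_re.comp_continuousOn
      (h1.mul (Complex.continuous_conj.comp_continuousOn h2))
  have ho := hc.isOpen_inter_preimage Metric.isOpen_ball (isOpen_Ioi (a := (0:ℝ)))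
  have hlt : 1 / (1 + m : ℝ) ≤ 1 / 2 := by gcongr; linarith
  have hsub : Metric.closedBall (0:ℂ) (1 / (1 + m : ℝ)) ⊆ Metric.ball 0 2 ∩
      (fun u => (Psi b m u * conj (Psi b 0 u)).re) ⁻¹' Set.Ioi 0 := by
    intro u hu
    have hu := mem_closedBall_zero_iff.1 hu
    refine ⟨mem_ball_zero_iff.2 (by linarith), ?_⟩
    exact Psi_pos h hm (by rwa [le_div_iff₀ (by linarith)] at hu)
  obtain ⟨δ, hδ, hsub2⟩ := (isCompact_closedBall (0:ℂ) _).exists_thickening_subset_open ho hsub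
  rw [thickening_closedBall hδ (by positivity)] at hsub2
  refine ⟨min (δ + 1 / (1 + m : ℝ)) 2, lt_min (by linarith) (by linarith), min_le_right _ _, ?_⟩
  intro u hu
  exact (hsub2 (mem_ball_zero_iff.2 (lt_of_lt_of_le hu (min_le_left _ _)))).2

lemma Psi_real {b : ℕ → ℝ} (m : ℕ) (x : ℝ) :
    Psi b m (x : ℂ) = ((∑' n : ℕ, (-1) ^ n * (((1 + m * n) * b n) * x ^ n) : ℝ) : ℂ) := by
  rw [Complex.ofReal_tsum]
  refine tsum_congr fun n => ?_
  simp [PsiT]; ring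

lemma real_summable {b : ℕ → ℝ} (h : GoodB b) (m : ℕ) {x : ℝ} (hx0 : 0 ≤ x) (hx : x ≤ 1) :
    Summable (fun n : ℕ => ((1 + m * n) * b n) * x ^ n) := by
  have := (Psi_summable h m (u := (x : ℂ)) (by simp [abs_of_nonneg hx0]; linarith)).norm
  refine this.congr fun n => ?_
  rw [norm_mul, norm_pow, Complex.norm_real, Complex.norm_real, Real.norm_eq_abs, abs_PsiT h,
    Real.norm_eq_abs, abs_of_nonneg hx0]

lemma Psi_real_le {b : ℕ → ℝ} (h : GoodB b) (m : ℕ) {x : ℝ} (hx0 : 0 ≤ x) (hx : x ≤ 1) :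
    ∑' n : ℕ, (-1) ^ n * (((1 + m * n) * b n) * x ^ n) ≤
      1 - (1 + m) * x + (1 + 2 * m) * b 2 * x ^ 2 := by
  have hs := real_summable h m hx0 hx
  have hs2 := (summable_nat_add_iff 2).2 hs
  have hs' : Summable (fun n : ℕ => (-1) ^ n * (((1 + m * n) * b n) * x ^ n)) := by
    refine Summable.of_norm ?_
    refine hs.norm.congr fun n => ?_
    simp [norm_mul]
  have anti : Antitone (fun k : ℕ => (1 + m * ((k + 2 : ℕ) : ℝ)) * b (k + 2) * x ^ (k + 2)) := by
    refine antitone_nat_of_succ_le fun k => ?_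
    have hb := h.ratio (k + 2) (by omega)
    have hp := h.pos (k + 2)
    have hp' := h.pos (k + 1 + 2)
    have e : k + 1 + 2 = k + 2 + 1 := by ring
    have h1 : x ^ (k + 1 + 2) ≤ x ^ (k + 2) := pow_le_pow_of_le_one hx0 hx (by omega)
    refine mul_le_mul ?_ h1 (by positivity) (by positivity)
    rw [e] at hp' ⊢
    push_cast
    have : (0:ℝ) ≤ m := by positivity
    have : (0:ℝ) ≤ m * k := by positivity
    calc (1 + (m:ℝ) * (k + 2 + 1)) * b (k + 2 + 1) ≤ (1 + (m:ℝ) * (k + 2 + 1)) * (b (k + 2) / 6) := by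
          gcongr
      _ ≤ _ := by nlinarith
  have up := anti.tendsto_le_alternating_series hs2.tendsto_alternating_series_tsum 0
  rw [← hs'.sum_add_tsum_nat_add 2]
  have e : ∑' i : ℕ, (-1) ^ (i + 2) * (((1 + m * ((i + 2 : ℕ):ℝ)) * b (i + 2)) * x ^ (i + 2)) =
      ∑' i : ℕ, (-1) ^ i * (((1 + m * ((i + 2 : ℕ):ℝ)) * b (i + 2)) * x ^ (i + 2)) := by
    refine tsum_congr fun i => ?_
    rw [pow_add (-1 : ℝ)]; norm_num
  rw [e]
  simp [Finset.sum_range_succ, h.zero, h.one] at up ⊢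
  linarith

lemma Psi_real_ge {b : ℕ → ℝ} (h : GoodB b) {x : ℝ} (hx0 : 0 ≤ x) (hx : x ≤ 1) :
    0 ≤ ∑' n : ℕ, (-1) ^ n * (((1 + ((0:ℕ):ℝ) * n) * b n) * x ^ n) := by
  have hs := real_summable h 0 hx0 hx
  have anti : Antitone (fun k : ℕ => (1 + ((0:ℕ):ℝ) * k) * b k * x ^ k) := by
    refine antitone_nat_of_succ_le fun k => ?_
    have hp := h.pos k
    have hp' := h.pos (k + 1)
    have h1 : x ^ (k + 1) ≤ x ^ k := pow_le_pow_of_le_one hx0 hx (by omega)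
    have hb : b (k + 1) ≤ b k := by
      rcases k with _ | k
      · rw [h.zero, h.one]
      · linarith [h.ratio (k + 1) (by omega)]
    simp only [Nat.cast_zero, zero_mul, add_zero, one_mul]
    exact mul_le_mul hb h1 (by positivity) (by positivity)
  have := anti.alternating_series_le_tendsto hs.tendsto_alternating_series_tsum 0
  simpa using this

lemma exists_upper {b : ℕ → ℝ} (h : GoodB b) {m : ℕ} (hm : m = 1 ∨ m = 2) :
    ∃ x : ℝ, 0 < x ∧ x ≤ 1 ∧ x < (1 + m) / ((1 + m) ^ 2 - 2 * (1 + 2 * m) * b 2) ∧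
      1 - (1 + m) * x + (1 + 2 * m) * b 2 * x ^ 2 ≤ 0 := by
  have hb0 := h.pos 2
  have hb : b 2 ≤ 1 / 6 := by have := h.ratio 1 le_rfl; rwa [h.one] at this
  have hmr : (m : ℝ) = 1 ∨ (m : ℝ) = 2 := by rcases hm with rfl | rfl <;> norm_num
  have hm0 : (1:ℝ) ≤ m := by rcases hm with rfl | rfl <;> norm_num
  set D := (1 + m : ℝ) ^ 2 - 2 * (1 + 2 * m) * b 2 with hD
  have hD0 : 1 + (m:ℝ) ≤ D := by
    rcases hmr with h | h <;> rw [hD, h] <;> norm_num <;> linarith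
  have hDp : 0 < D := by linarith
  have hneg : 1 - (1 + m) * ((1 + m) / D) + (1 + 2 * m) * b 2 * ((1 + m) / D) ^ 2 < 0 := by
    have : 1 - (1 + m) * ((1 + m) / D) + (1 + 2 * m) * b 2 * ((1 + m) / D) ^ 2 =
      (D ^ 2 - (1 + m) ^ 2 * D + (1 + 2 * m) * b 2 * (1 + m) ^ 2) / D ^ 2 := by
      field_simp
    rw [this]
    apply div_neg_of_neg_of_pos _ (by positivity)
    rcases hmr with h | h <;> rw [hD, h] <;> nlinarith
  have hcont : Continuous (fun x : ℝ => 1 - (1 + m) * x + (1 + 2 * m) * b 2 * x ^ 2) := by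
    fun_prop
  have ev1 : ∀ᶠ x in nhdsWithin ((1 + m) / D) (Set.Iio ((1 + m) / D)),
      1 - (1 + m) * x + (1 + 2 * m) * b 2 * x ^ 2 < 0 :=
    nhdsWithin_le_nhds (hcont.continuousAt.eventually_lt_const hneg)
  have hpos : 0 < (1 + m) / D := by positivity
  have ev2 : ∀ᶠ x in nhdsWithin ((1 + m) / D) (Set.Iio ((1 + m) / D)), 0 < x :=
    nhdsWithin_le_nhds (lt_mem_nhds hpos)
  obtain ⟨x, ⟨h1, h2⟩, h3⟩ := ((ev1.and ev2).and self_mem_nhdsWithin).exists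
  have h3 : x < (1 + m) / D := h3
  have : (1 + m) / D ≤ 1 := by rw [div_le_one hDp]; exact hD0
  exact ⟨x, h2, by linarith, h3, h1.le⟩

lemma radius_bounds {b : ℕ → ℝ} (h : GoodB b) {m : ℕ} (hm : m = 1 ∨ m = 2) {s : ℝ} (hs : 0 < s)
    {f : ℂ → ℂ} (hf : ∀ z, f z = z * Psi b 0 (s * z ^ m)) :
    1 / (1 + m : ℝ) < s * radiusStarlike 0 f ^ m ∧
    s * radiusStarlike 0 f ^ m < (1 + m) / ((1 + m) ^ 2 - 2 * (1 + 2 * m) * b 2) := by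
  have hm1 : m ≠ 0 := by rcases hm with rfl | rfl <;> norm_num
  have root : ∀ ρ : ℝ, 0 < ρ → ∃ r : ℝ, 0 < r ∧ s * r ^ m = ρ := by
    intro ρ hρ
    refine ⟨(ρ / s) ^ ((m : ℝ)⁻¹), by positivity, ?_⟩
    rw [Real.rpow_inv_natCast_pow (by positivity) hm1]
    field_simp
  have hnorm : ∀ z : ℂ, ‖(s * z ^ m : ℂ)‖ = s * ‖z‖ ^ m := by
    intro z
    rw [norm_mul, norm_pow, Complex.norm_real, Real.norm_eq_abs, abs_of_pos hs]
  have quot : ∀ z : ℂ, z ≠ 0 → s * ‖z‖ ^ m < 2 →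
      z * deriv f z / f z = Psi b m (s * z ^ m) / Psi b 0 (s * z ^ m) := by
    intro z hz hz2
    obtain ⟨D, hD, hP⟩ := Psi_deriv h (u := s * z ^ m) (by rwa [hnorm])
    have hi : HasDerivAt (fun z : ℂ => (s * z ^ m : ℂ)) (s * (m * z ^ (m - 1))) z :=
      (hasDerivAt_pow m z).const_mul _
    have hd := (hasDerivAt_id z).mul (hD.comp z hi)
    have hfe : f = (id * (Psi b 0 ∘ fun z : ℂ => (s * z ^ m : ℂ))) := by
      funext z; simp [hf]
    have hdf : deriv f z = Psi b m (s * z ^ m) := by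
      rw [hfe, hd.deriv, hP m]
      have : z ^ m = z ^ (m - 1) * z := by
        rw [← pow_succ, Nat.sub_add_cancel (Nat.one_le_iff_ne_zero.2 hm1)]
      simp only [id, Function.comp]
      rw [this]; ring
    rw [hdf, hf, mul_div_mul_left _ _ hz]
  obtain ⟨ρ, hρ1, hρ2, hρ⟩ := Psi_pos_nhd h hm
  have hρ0 : 0 < ρ := lt_trans (by positivity) hρ1
  obtain ⟨r, hr0, hr⟩ := root ρ hρ0
  obtain ⟨x, hx0, hx1, hxu, hx⟩ := exists_upper h hm
  obtain ⟨t, ht0, ht⟩ := root x hx0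
  have hmem : r ∈ {r : ℝ | 0 < r ∧ ∀ z : ℂ, 0 < ‖z‖ → ‖z‖ < r →
      0 < (z * deriv f z / f z).re} := by
    refine ⟨hr0, fun z hz hzr => ?_⟩
    have hlt : s * ‖z‖ ^ m < ρ := by rw [← hr]; gcongr
    rw [quot z (norm_pos_iff.1 hz) (by linarith)]
    have hp := hρ (s * z ^ m) (by rwa [hnorm])
    have hne : Psi b 0 (s * z ^ m) ≠ 0 := by
      intro h0; simp [h0] at hp
    have hn : 0 < Complex.normSq (Psi b 0 (s * z ^ m)) := Complex.normSq_pos.2 hne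
    rw [Complex.div_re, ← add_div]
    refine div_pos ?_ hn
    simpa [Complex.mul_re] using hp
  have hub : ∀ r' ∈ {r : ℝ | 0 < r ∧ ∀ z : ℂ, 0 < ‖z‖ → ‖z‖ < r →
      0 < (z * deriv f z / f z).re}, r' ≤ t := by
    rintro r' ⟨_, hr'⟩
    by_contra! hlt
    have htn : ‖(t:ℂ)‖ = t := by simp [abs_of_pos ht0]
    have := hr' t (by rwa [htn]) (by rwa [htn])
    rw [quot t (by exact_mod_cast ht0.ne') (by rw [htn, ht]; linarith)] at this
    have e : (s * (t:ℂ) ^ m : ℂ) = (x : ℂ) := by rw [← ht]; push_cast; rfl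
    rw [e, Psi_real, Psi_real, ← Complex.ofReal_div, Complex.ofReal_re] at this
    have h1 := Psi_real_le h m hx0.le hx1
    have h2 := Psi_real_ge h hx0.le hx1
    exact absurd this (not_lt.2 (div_nonpos_of_nonpos_of_nonneg (h1.trans hx) h2))
  have hle : r ≤ radiusStarlike 0 f := le_csSup ⟨t, hub⟩ hmem
  have hge : radiusStarlike 0 f ≤ t := csSup_le ⟨r, hmem⟩ hub
  constructor
  · refine lt_of_lt_of_le hρ1 ?_
    rw [← hr]
    gcongr
  · refine lt_of_le_of_lt ?_ hxu
    rw [← ht]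
    have : 0 ≤ radiusStarlike 0 f := hr0.le.trans hle
    gcongr

lemma bC_good {q : ℝ} (hq0 : 0 < q) (hq1 : q < 1) : GoodB (bC q) :=
  ⟨bC_zero hq0 hq1, bC_one hq0 hq1, bC_pos hq0 hq1, bC_ratio hq0 hq1⟩

lemma coef_eq {q : ℝ} (hq0 : 0 < q) (σ : ℝ) (n : ℕ) (w : ℂ) :
    (((-1) ^ n * σ ^ (2 * n) * q ^ (n * (n - 1)) / qGamma q (2 * n + 1) : ℝ) : ℂ) * w ^ n =
      ((PsiT (bC q) 0 n : ℝ) : ℂ) * (((σ ^ 2 / (1 + q) : ℝ) : ℂ) * w) ^ n := by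
  have h1 : (1 + q) ^ n ≠ 0 := by positivity
  rw [mul_pow, ← mul_assoc]
  congr 1
  rw [← Complex.ofReal_pow, ← Complex.ofReal_mul]
  congr 1
  simp only [PsiT, bC, div_pow]
  rw [← pow_mul]
  simp only [Nat.cast_zero, zero_mul, add_zero, one_mul]
  field_simp

theorem stmt18 (q σ : ℝ) (hq0 : 0 < q) (hq1 : q < 1) (hσ : 0 < σ) :
    ((1 + q) / (3 * σ ^ 2) < radiusStarlike 0 (gML0 σ q) ^ 2 ∧
      radiusStarlike 0 (gML0 σ q) ^ 2 <
        3 * (1 + q) * (1 + q ^ 2) * (1 + q + q ^ 2) /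
          (σ ^ 2 * (9 * q ^ 4 + 9 * q ^ 3 + 8 * q ^ 2 + 9 * q + 9))) ∧
    ((1 + q) / (2 * σ ^ 2) < radiusStarlike 0 (hML0 σ q) ∧
      radiusStarlike 0 (hML0 σ q) <
        (1 + q) * (1 + q ^ 2) * (1 + q + q ^ 2) /
          (σ ^ 2 * (2 * q ^ 4 + 2 * q ^ 3 + q ^ 2 + 2 * q + 2))) := by
  have hb := bC_good hq0 hq1
  have hs : 0 < σ ^ 2 / (1 + q) := by positivity
  have hg : ∀ z, gML0 σ q z = z * Psi (bC q) 0 ((σ ^ 2 / (1 + q) : ℝ) * z ^ 2) := by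
    intro z
    unfold gML0 qML Psi
    congr 1
    refine tsum_congr fun n => ?_
    rw [← coef_eq hq0, pow_mul z, add_zero]
  have hh : ∀ z, hML0 σ q z = z * Psi (bC q) 0 ((σ ^ 2 / (1 + q) : ℝ) * z ^ 1) := by
    intro z
    unfold hML0 Psi
    congr 1
    refine tsum_congr fun n => ?_
    rw [pow_one, ← coef_eq hq0]
  obtain ⟨g1, g2⟩ := radius_bounds hb (Or.inr rfl) hs hg
  obtain ⟨h1, h2⟩ := radius_bounds hb (Or.inl rfl) hs hh
  rw [bC_two hq0 hq1] at g2 h2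
  rw [pow_one] at h1 h2
  generalize radiusStarlike 0 (gML0 σ q) ^ 2 = G at *
  generalize radiusStarlike 0 (hML0 σ q) = H at *
  have cancel : ∀ X Y : ℝ, X < σ ^ 2 / (1 + q) * Y ↔ X * (1 + q) / σ ^ 2 < Y := by
    intro X Y
    rw [div_lt_iff₀ (by positivity), div_mul_eq_mul_div, lt_div_iff₀ (by positivity),
      mul_comm Y]
  have cancel' : ∀ X Y : ℝ, σ ^ 2 / (1 + q) * Y < X ↔ Y < X * (1 + q) / σ ^ 2 := by
    intro X Y
    rw [lt_div_iff₀ (by positivity), div_mul_eq_mul_div, div_lt_iff₀ (by positivity),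
      mul_comm Y]
  rw [cancel] at g1 h1
  rw [cancel'] at g2 h2
  have hP : 0 < (1 + q + q ^ 2) * (1 + q ^ 2) := by positivity
  refine ⟨⟨?_, ?_⟩, ?_, ?_⟩
  · refine lt_of_eq_of_lt ?_ g1
    push_cast; field_simp; norm_num
  · refine lt_of_lt_of_eq g2 ?_
    have e : (1 + ((2:ℕ):ℝ)) ^ 2 - 2 * (1 + 2 * ((2:ℕ):ℝ)) *
        (q ^ 2 / ((1 + q + q ^ 2) * (1 + q ^ 2))) =
        (9 * q ^ 4 + 9 * q ^ 3 + 8 * q ^ 2 + 9 * q + 9) / ((1 + q + q ^ 2) * (1 + q ^ 2)) := by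
      rw [eq_div_iff hP.ne', sub_mul, mul_assoc _ (_ / _), div_mul_cancel₀ _ hP.ne']
      push_cast; ring
    rw [e]
    have : 0 < 9 * q ^ 4 + 9 * q ^ 3 + 8 * q ^ 2 + 9 * q + 9 := by positivity
    push_cast
    field_simp
    ring
  · refine lt_of_eq_of_lt ?_ h1
    push_cast; field_simp; norm_num
  · refine lt_of_lt_of_eq h2 ?_
    have e : (1 + ((1:ℕ):ℝ)) ^ 2 - 2 * (1 + 2 * ((1:ℕ):ℝ)) *
        (q ^ 2 / ((1 + q + q ^ 2) * (1 + q ^ 2))) =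
        2 * (2 * q ^ 4 + 2 * q ^ 3 + q ^ 2 + 2 * q + 2) / ((1 + q + q ^ 2) * (1 + q ^ 2)) := by
      rw [eq_div_iff hP.ne', sub_mul, mul_assoc _ (_ / _), div_mul_cancel₀ _ hP.ne']
      push_cast; ring
    rw [e]
    have : 0 < 2 * q ^ 4 + 2 * q ^ 3 + q ^ 2 + 2 * q + 2 := by positivity
    push_cast
    field_simp
    ring
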